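/- arXiv:1102.2734 — 2 statements merged into one kernel-verified Lean document; each statement's English description precedes it below -/
import Mathlib

section
/- Let m ≥ 2 and 0 ≤ r with m ≥ 2r. Then U_{α^(m)}(RM(r,m)) = Σ_{i=0}^{r−1} k(r−1−i, m−1−2i) and U_{β^(m)}(RM(r,m)) = Σ_{i=1}^{r−1} k(r−1−i, m−2i) (both sums are empty, hence 0, when they have no terms). -/
open Module

/-- The submodule of vectors supported on `J` (i.e. zero outside `J`). -/
def supportedOn (F : Type) [Field F] {n : ℕ} (J : Set (Fin n)) : Submodule F (Fin n → F) :=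
  Submodule.pi Jᶜ fun _ => ⊥

/-- Dimension of the shortening `C_J` of the code `C` to the coordinates in `J`. -/
noncomputable def shortDim {F : Type} [Field F] {n : ℕ}
    (C : Submodule F (Fin n → F)) (J : Set (Fin n)) : ℕ :=
  finrank F ↥(C ⊓ supportedOn F J)

/-- Support of a subcode. -/
def chi {F : Type} [Field F] {n : ℕ} (D : Submodule F (Fin n → F)) : Set (Fin n) :=
  {i | ∃ c ∈ D, c i ≠ 0}

/-- `Ucap C s`: maximal dimension of a subcode of `C` whose support has size at most `s`. -/
noncomputable def Ucap {F : Type} [Field F] {n : ℕ}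
    (C : Submodule F (Fin n → F)) (s : ℕ) : ℕ :=
  sSup {d : ℕ | ∃ D : Submodule F (Fin n → F), D ≤ C ∧ (chi D).ncard ≤ s ∧ finrank F ↥D = d}

/-- The binary Reed–Muller code `RM(r,m)`: the evaluation vectors, at the points of
`{0,1}^m` listed in the standard bit order, of the `m`-variable polynomials over `F₂`
of total degree at most `r`. -/
def RMcode (r m : ℕ) : Submodule (ZMod 2) (Fin (2 ^ m) → ZMod 2) :=
  Submodule.span (ZMod 2)
    {w | ∃ f : MvPolynomial (Fin m) (ZMod 2), f.totalDegree ≤ r ∧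
      w = fun i => MvPolynomial.eval (fun j : Fin m => if Nat.testBit i.val j.val then 1 else 0) f}

/-- `k(r,m) = ∑_{j=0}^{r} C(m,j)`, the dimension of `RM(r,m)`. -/
def kRM (r m : ℕ) : ℕ := ∑ j ∈ Finset.range (r + 1), Nat.choose m j

/-- `α(m)`: the largest integer not exceeding `(2/3)·2^m`. -/
def alph (m : ℕ) : ℕ := 2 ^ (m + 1) / 3

/-- `β(m)`: the largest integer not exceeding `(1/3)·2^m`. -/
def bet (m : ℕ) : ℕ := 2 ^ m / 3

/-!
For every `s ≤ 2 ^ m`, `U_s(RM(r,m))` is the number of `n < s` with at least `m - r` binary ones.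

For such an `n`, the word of `∏ (1 + X_j)`, the product over the binary zeros `j` of `n`, is
supported on indices at most `n` and is nonzero at `n`; by triangularity these words span a subcode
of the required dimension. Conversely, split a word of length `2 ^ (m + 1)` into two slices by the
least significant bit of the index. The slices of a word of `RM(r,m+1)` lie in `RM(r,m)` and differ
by a word of `RM(r-1,m)`, so the dimension of a subcode `D` is at most the sum of the bounds for
`RM(r,m)` on the slice where `D` has the smaller support and for `RM(r-1,m)` on the other slice.
Superadditivity of the count, `heavyCount_pred_add_le`, closes this induction on `m`.

Among the `n < 2 ^ m + s` with `s ≤ 2 ^ m`, those below `2 ^ m` contribute the dimension of a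
Reed–Muller code and the others are counted by removing the leading digit. Since
`α(m+1) = 2 ^ m + β(m)` and `β(m+1) = α(m)`, iterating this gives both sums.
-/

section BitWeight

/-- The number of ones in the binary expansion of `n`. -/
def bitWeight (n : ℕ) : ℕ := n.bitIndices.length

theorem bitWeight_two_mul (n : ℕ) : bitWeight (2 * n) = bitWeight n := by
  simp [bitWeight]

theorem bitWeight_two_mul_add_one (n : ℕ) : bitWeight (2 * n + 1) = bitWeight n + 1 := by
  simp [bitWeight]

theorem card_filter_testBit {m n : ℕ} (hn : n < 2 ^ m) :
    Finset.card {j : Fin m | n.testBit j} = bitWeight n := by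
  have himage : ({j : Fin m | n.testBit j} : Finset (Fin m)).map Fin.valEmbedding =
      n.bitIndices.toFinset := by
    ext j
    simp only [Finset.mem_map, Finset.mem_filter_univ, Fin.valEmbedding_apply, List.mem_toFinset,
      Nat.mem_bitIndices]
    refine ⟨fun ⟨_, hk, hkj⟩ ↦ hkj ▸ hk, fun hj ↦ ⟨⟨j, ?_⟩, hj, rfl⟩⟩
    exact (Nat.pow_lt_pow_iff_right one_lt_two).1 ((Nat.ge_two_pow_of_testBit hj).trans_lt hn)
  rw [← Finset.card_map, himage, List.toFinset_card_of_nodup Nat.bitIndices_nodup, bitWeight]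

theorem card_filter_not_testBit {m n : ℕ} (hn : n < 2 ^ m) :
    Finset.card {j : Fin m | ¬ n.testBit j} = m - bitWeight n := by
  have hsum := Finset.card_filter_add_card_filter_not (s := (Finset.univ : Finset (Fin m)))
    (fun j ↦ n.testBit j)
  rw [card_filter_testBit hn, Finset.card_fin] at hsum
  omega

theorem bitWeight_le {m n : ℕ} (hn : n < 2 ^ m) : bitWeight n ≤ m := by
  simpa [card_filter_testBit hn] using Finset.card_le_univ {j : Fin m | n.testBit j}

/-- The number of `n < s` whose binary expansion has at least `t` ones. -/
def heavyCount (t s : ℕ) : ℕ := Nat.count (fun n ↦ t ≤ bitWeight n) s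

theorem card_filter_heavy {t s N : ℕ} (hs : s ≤ N) :
    Finset.card {i : Fin N | i.val < s ∧ t ≤ bitWeight i} = heavyCount t s := by
  rw [heavyCount, Nat.count_eq_card_filter_range, ← Finset.card_map Fin.valEmbedding]
  congr 1
  ext i
  simp only [Finset.mem_filter, Finset.mem_range, Finset.mem_map, Finset.mem_univ, true_and,
    Fin.valEmbedding_apply]
  exact ⟨fun ⟨_, hk, hki⟩ ↦ hki ▸ hk, fun hi ↦ ⟨⟨i, hi.1.trans_le hs⟩, hi, rfl⟩⟩

theorem heavyCount_zero_left (s : ℕ) : heavyCount 0 s = s := by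
  simp [heavyCount]

theorem heavyCount_mono (t : ℕ) : Monotone (heavyCount t) := Nat.count_monotone _

theorem heavyCount_succ_eq_zero {m s : ℕ} (hs : s ≤ 2 ^ m) : heavyCount (m + 1) s = 0 :=
  Nat.count_iff_forall_not.2 fun _ hn ↦
    Nat.not_le.2 (Nat.lt_succ_of_le (bitWeight_le (hn.trans_le hs)))

theorem heavyCount_two_mul (t s : ℕ) :
    heavyCount t (2 * s) = heavyCount t s + heavyCount (t - 1) s := by
  induction s with
  | zero => rfl
  | succ s ih =>
    simp only [heavyCount] at ih ⊢
    simp only [Nat.mul_succ, Nat.count_succ, ih, bitWeight_two_mul, bitWeight_two_mul_add_one,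
      Nat.sub_le_iff_le_add]
    ring

theorem heavyCount_eq_add_halves (t s : ℕ) :
    heavyCount t s = heavyCount t ((s + 1) / 2) + heavyCount (t - 1) (s / 2) := by
  rcases s.even_or_odd' with ⟨s, rfl | rfl⟩
  · rw [heavyCount_two_mul, show (2 * s + 1) / 2 = s by omega, show 2 * s / 2 = s by omega]
  · rw [show (2 * s + 1 + 1) / 2 = s + 1 by omega, show (2 * s + 1) / 2 = s by omega]
    have heven := heavyCount_two_mul t s
    simp only [heavyCount] at heven ⊢
    rw [Nat.count_succ, Nat.count_succ, heven, bitWeight_two_mul]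
    ring

theorem heavyCount_two_pow_add (t : ℕ) {m s : ℕ} (hs : s ≤ 2 ^ m) :
    heavyCount t (2 ^ m + s) = heavyCount t (2 ^ m) + heavyCount (t - 1) s := by
  induction m generalizing t s with
  | zero =>
    obtain rfl | rfl : s = 0 ∨ s = 1 := by omega
    · rfl
    · exact heavyCount_two_mul t 1
  | succ m ih =>
    have hceil : (2 ^ (m + 1) + s + 1) / 2 = 2 ^ m + (s + 1) / 2 := by omega
    have hfloor : (2 ^ (m + 1) + s) / 2 = 2 ^ m + s / 2 := by omega
    rw [heavyCount_eq_add_halves, hceil, hfloor, ih _ (by omega), ih _ (by omega), pow_succ',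
      heavyCount_two_mul, heavyCount_eq_add_halves (t - 1) s]
    ring

theorem heavyCount_exchange_succ (t s : ℕ) :
    heavyCount t (s + 1) + heavyCount (t - 1) s ≤ heavyCount t s + heavyCount (t - 1) (s + 1) := by
  simp only [heavyCount, Nat.count_succ]
  split_ifs <;> omega

theorem heavyCount_pred_add_le (t : ℕ) {a b : ℕ} (hab : a ≤ b) :
    heavyCount (t - 1) a + heavyCount t b ≤ heavyCount t (a + b) := by
  induction b using Nat.strong_induction_on generalizing t a with | _ b ih
  rcases hab.eq_or_lt with rfl | hlt
  · rw [← two_mul, heavyCount_two_mul, add_comm]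
  rcases a.eq_zero_or_pos with rfl | ha
  · simp [heavyCount]
  rw [heavyCount_eq_add_halves _ a, heavyCount_eq_add_halves _ b,
    heavyCount_eq_add_halves _ (a + b)]
  by_cases hodd : a % 2 = 1 ∧ b % 2 = 1
  · have hceil := ih ((b + 1) / 2) (by omega) t (a := a / 2) (by omega)
    have hfloor := ih (b / 2) (by omega) (t - 1) (a := a / 2 + 1) (by omega)
    have hswap := heavyCount_exchange_succ (t - 1) (a / 2)
    rw [show (a + 1) / 2 = a / 2 + 1 by omega,
      show (a + b + 1) / 2 = a / 2 + (b + 1) / 2 by omega,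
      show (a + b) / 2 = a / 2 + 1 + b / 2 by omega]
    omega
  · have hceil := ih ((b + 1) / 2) (by omega) t (a := (a + 1) / 2) (by omega)
    have hfloor := ih (b / 2) (by omega) (t - 1) (a := a / 2) (by omega)
    rw [show (a + b + 1) / 2 = (a + 1) / 2 + (b + 1) / 2 by omega,
      show (a + b) / 2 = a / 2 + b / 2 by omega]
    omega

theorem kRM_zero (m : ℕ) : kRM 0 m = 1 := by simp [kRM]

theorem kRM_succ_succ (r m : ℕ) : kRM (r + 1) (m + 1) = kRM (r + 1) m + kRM r m := by
  simp only [kRM, Finset.sum_range_succ' _ (r + 1), Nat.choose_succ_succ, Finset.sum_add_distrib,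
    Nat.choose_zero_right]
  ring

theorem heavyCount_two_pow (r m : ℕ) : heavyCount (m - r) (2 ^ m) = kRM r m := by
  induction m generalizing r with
  | zero => simp [heavyCount_zero_left, kRM, Finset.sum_range_succ']
  | succ m ih =>
    rw [pow_succ', heavyCount_two_mul]
    cases r with
    | zero =>
      rw [Nat.sub_zero, heavyCount_succ_eq_zero le_rfl, Nat.add_sub_cancel, zero_add, kRM_zero,
        ← kRM_zero m, ← ih 0, Nat.sub_zero]
    | succ r =>
      rw [kRM_succ_succ, ← ih (r + 1), ← ih r, Nat.add_sub_add_right, Nat.sub_sub, add_comm]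

theorem alph_succ (m : ℕ) : alph (m + 1) = 2 ^ m + bet m := by
  simp only [alph, bet, pow_succ]
  omega

theorem bet_succ (m : ℕ) : bet (m + 1) = alph m := rfl

theorem bet_le_two_pow (m : ℕ) : bet m ≤ 2 ^ m := Nat.div_le_self _ _

theorem alph_le_two_pow (m : ℕ) : alph m ≤ 2 ^ m := by
  simp only [alph, pow_succ]
  omega

theorem sum_range_succ_kRM (r m : ℕ) :
    ∑ i ∈ Finset.range (r + 1), kRM (r - i) (m - 2 * i) =
      kRM r m + ∑ i ∈ Finset.Icc 1 r, kRM (r - i) (m - 2 * i) := by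
  rw [Finset.range_eq_Ico, Finset.sum_eq_sum_Ico_succ_bot r.succ_pos,
    ← Finset.Ico_succ_right_eq_Icc]
  rfl

theorem sum_Icc_one_kRM (r m : ℕ) :
    ∑ i ∈ Finset.Icc 1 r, kRM (r - i) (m + 1 - 2 * i) =
      ∑ i ∈ Finset.range r, kRM (r - 1 - i) (m - 1 - 2 * i) := by
  rw [← Finset.Ico_succ_right_eq_Icc, Finset.sum_Ico_eq_sum_range, Order.succ_eq_add_one,
    Nat.add_sub_cancel]
  refine Finset.sum_congr rfl fun i _ ↦ ?_
  congr 1 <;> omega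

theorem heavyCount_alph_and_bet (m r : ℕ) :
    (2 * r ≤ m + 1 → heavyCount (m - r) (alph m) =
      ∑ i ∈ Finset.range r, kRM (r - 1 - i) (m - 1 - 2 * i)) ∧
    (2 * r ≤ m + 2 → heavyCount (m - r) (bet m) =
      ∑ i ∈ Finset.Icc 1 (r - 1), kRM (r - 1 - i) (m - 2 * i)) := by
  induction m generalizing r with
  | zero =>
    refine ⟨fun hr ↦ ?_, fun hr ↦ ?_⟩
    · simp [show r = 0 by omega, alph, heavyCount]
    · simp [show r - 1 = 0 by omega, bet, heavyCount]
  | succ m ih =>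
    rw [alph_succ, bet_succ, heavyCount_two_pow_add _ (bet_le_two_pow m)]
    cases r with
    | zero =>
      have hbet : heavyCount m (bet m) = 0 := (ih 0).2 (Nat.zero_le _)
      simp [heavyCount_succ_eq_zero, alph_le_two_pow, hbet]
    | succ r =>
      rw [Nat.add_sub_add_right, Nat.sub_sub, heavyCount_two_pow]
      refine ⟨fun hr ↦ ?_, fun hr ↦ ?_⟩
      · rw [(ih (r + 1)).2 (by omega)]
        exact (sum_range_succ_kRM r m).symm
      · rw [(ih r).1 (by omega)]
        exact (sum_Icc_one_kRM r m).symm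

end BitWeight

section LinearCode

variable {F : Type} [Field F] {n k : ℕ}

theorem chi_subset_of_le_supportedOn {D : Submodule F (Fin n → F)} {J : Set (Fin n)}
    (hD : D ≤ supportedOn F J) : chi D ⊆ J := by
  rintro i ⟨c, hc, hci⟩
  by_contra hi
  exact hci (hD hc i hi)

theorem chi_mono {D E : Submodule F (Fin n → F)} (hDE : D ≤ E) : chi D ⊆ chi E :=
  fun _ ⟨c, hc, hci⟩ ↦ ⟨c, hDE hc, hci⟩

theorem chi_map_funLeft (D : Submodule F (Fin n → F)) (e : Fin k → Fin n) :
    chi (D.map (LinearMap.funLeft F F e)) = e ⁻¹' chi D := by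
  ext i
  simp [chi, LinearMap.funLeft_apply]

theorem finrank_le_ncard_chi (D : Submodule F (Fin n → F)) : finrank F D ≤ (chi D).ncard := by
  classical
  let restrict : D →ₗ[F] chi D → F := LinearMap.funLeft F F Subtype.val ∘ₗ D.subtype
  have hinj : Function.Injective restrict := by
    refine (injective_iff_map_eq_zero restrict).2 fun w hw ↦ Subtype.ext (funext fun i ↦ ?_)
    by_contra hi
    exact hi (congrFun hw ⟨i, w, w.2, hi⟩)
  simpa [Nat.card_coe_set_eq, ← Nat.card_eq_fintype_card] using
    LinearMap.finrank_le_finrank_of_injective hinj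

theorem le_Ucap {C D : Submodule F (Fin n → F)} {s : ℕ} (hDC : D ≤ C)
    (hs : (chi D).ncard ≤ s) : finrank F D ≤ Ucap C s := by
  refine le_csSup ⟨finrank F C, ?_⟩ ⟨D, hDC, hs, rfl⟩
  rintro _ ⟨E, hEC, -, rfl⟩
  exact Submodule.finrank_mono hEC

theorem Ucap_le {C : Submodule F (Fin n → F)} {s d : ℕ}
    (h : ∀ D ≤ C, (chi D).ncard ≤ s → finrank F D ≤ d) : Ucap C s ≤ d := by
  refine csSup_le' ?_
  rintro _ ⟨D, hDC, hs, rfl⟩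
  exact h D hDC hs

theorem finrank_eq_finrank_map_add_finrank_map_inf_ker {K V V₁ V₂ : Type*} [DivisionRing K]
    [AddCommGroup V] [Module K V] [FiniteDimensional K V] [AddCommGroup V₁] [Module K V₁]
    [AddCommGroup V₂] [Module K V₂] {p : V →ₗ[K] V₁} {q : V →ₗ[K] V₂}
    (hpq : Disjoint p.ker q.ker) (D : Submodule K V) :
    finrank K D = finrank K (D.map p) + finrank K ((D ⊓ p.ker).map q) := by
  have hker : finrank K (p.domRestrict D).ker = finrank K ((D ⊓ p.ker).map q) := by
    rw [LinearMap.ker_domRestrict, ← Submodule.finrank_map_subtype_eq, Submodule.map_comap_subtype,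
      ← LinearMap.range_domRestrict, LinearMap.finrank_range_of_inj]
    exact LinearMap.injective_domRestrict_iff.2 (hpq.mono_left inf_le_right)
  rw [← hker, ← LinearMap.range_domRestrict, LinearMap.finrank_range_add_finrank_ker]

theorem ncard_preimage_add_ncard_preimage_le {α β γ : Type*} [Finite γ] {f : α → γ} {g : β → γ}
    (hf : f.Injective) (hg : g.Injective) (hfg : Disjoint (Set.range f) (Set.range g))
    (S : Set γ) : (f ⁻¹' S).ncard + (g ⁻¹' S).ncard ≤ S.ncard := by
  rw [← Set.ncard_image_of_injective _ hf, ← Set.ncard_image_of_injective _ hg,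
    ← Set.ncard_union_eq]
  · exact Set.ncard_le_ncard (by simp)
  · exact hfg.mono (Set.image_subset_range _ _) (Set.image_subset_range _ _)

end LinearCode

section ReedMuller

open MvPolynomial

/-- The point of `{0,1}^m` with index `i`, for `i < 2 ^ m`: its binary digits, the least
significant one first. -/
def bitPoint (m i : ℕ) : Fin m → ZMod 2 := fun j ↦ if i.testBit j then 1 else 0

/-- Evaluation of polynomials at all points of `{0,1}^m`, as a linear map. -/
noncomputable def evalBits (m : ℕ) :
    MvPolynomial (Fin m) (ZMod 2) →ₗ[ZMod 2] Fin (2 ^ m) → ZMod 2 :=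
  LinearMap.pi fun i ↦ (aeval (bitPoint m i)).toLinearMap

theorem evalBits_apply {m : ℕ} (f : MvPolynomial (Fin m) (ZMod 2)) (i : Fin (2 ^ m)) :
    evalBits m f i = eval (bitPoint m i) f := by
  simp [evalBits, aeval_eq_eval]

theorem RMcode_eq_map (r m : ℕ) :
    RMcode r m = (restrictTotalDegree (Fin m) (ZMod 2) r).map (evalBits m) := by
  rw [← Submodule.span_eq (Submodule.map _ _), RMcode]
  congr 1
  ext w
  simp only [Set.mem_ofPred_eq, SetLike.mem_coe, Submodule.mem_map, mem_restrictTotalDegree]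
  refine exists_congr fun f ↦ and_congr_right fun _ ↦ ?_
  rw [eq_comm, show evalBits m f = _ from funext (evalBits_apply f)]
  rfl

theorem mem_RMcode {r m : ℕ} {w : Fin (2 ^ m) → ZMod 2} :
    w ∈ RMcode r m ↔ ∃ f : MvPolynomial (Fin m) (ZMod 2), f.totalDegree ≤ r ∧ evalBits m f = w := by
  simp [RMcode_eq_map, mem_restrictTotalDegree]

/-- The polynomial that vanishes exactly at the points with a coordinate `1` in a position where
`i` has the binary digit `0`. -/
noncomputable def cellPoly (m i : ℕ) : MvPolynomial (Fin m) (ZMod 2) :=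
  ∏ j ∈ ({j : Fin m | ¬ i.testBit j} : Finset (Fin m)), (1 + X j)

theorem totalDegree_cellPoly_le {m i : ℕ} (hi : i < 2 ^ m) :
    (cellPoly m i).totalDegree ≤ m - bitWeight i := by
  have hfactor (j : Fin m) : (1 + X j : MvPolynomial (Fin m) (ZMod 2)).totalDegree ≤ 1 :=
    (totalDegree_add _ _).trans (by simp)
  rw [← card_filter_not_testBit hi, Finset.card_eq_sum_ones]
  exact (totalDegree_finsetProd _ _).trans (Finset.sum_le_sum fun j _ ↦ hfactor j)

theorem eval_cellPoly_ne_zero_iff {m i k : ℕ} :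
    eval (bitPoint m k) (cellPoly m i) ≠ 0 ↔ ∀ j < m, k.testBit j → i.testBit j := by
  have hfactor (j : Fin m) : 1 + bitPoint m k j ≠ 0 ↔ ¬ k.testBit j := by
    by_cases hj : k.testBit j <;> simp [bitPoint, hj, CharTwo.add_self_eq_zero]
  simp only [cellPoly, map_prod, map_add, map_one, eval_X, Finset.prod_ne_zero_iff, hfactor,
    Finset.mem_filter_univ, not_imp_not, Fin.forall_iff]

theorem evalBits_cellPoly_eq_zero {m : ℕ} {i k : Fin (2 ^ m)} (hik : i < k) :
    evalBits m (cellPoly m i) k = 0 := by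
  rw [evalBits_apply]
  by_contra hne
  rw [← ne_eq, eval_cellPoly_ne_zero_iff] at hne
  refine hik.not_ge (Nat.le_of_testBit fun j hj ↦ hne j ?_ hj)
  exact (Nat.pow_lt_pow_iff_right one_lt_two).1 ((Nat.ge_two_pow_of_testBit hj).trans_lt k.2)

theorem linearIndependent_evalBits_cellPoly (m : ℕ) :
    LinearIndependent (ZMod 2) fun i : Fin (2 ^ m) ↦ evalBits m (cellPoly m i) := by
  let A : Matrix (Fin (2 ^ m)) (Fin (2 ^ m)) (ZMod 2) :=
    Matrix.of fun i ↦ evalBits m (cellPoly m i)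
  have htri : A.IsLowerTriangular := fun i k hik ↦ evalBits_cellPoly_eq_zero hik
  have hdiag (i : Fin (2 ^ m)) : A i i ≠ 0 := by
    simpa [A, evalBits_apply] using eval_cellPoly_ne_zero_iff.2 fun _ _ hj ↦ hj
  exact Matrix.linearIndependent_rows_of_det_ne_zero
    (Matrix.det_of_isLowerTriangular A htri ▸ Finset.prod_ne_zero_iff.2 fun i _ ↦ hdiag i)

theorem heavyCount_le_Ucap_RMcode (r : ℕ) {m s : ℕ} (hs : s ≤ 2 ^ m) :
    heavyCount (m - r) s ≤ Ucap (RMcode r m) s := by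
  let heavy : Finset (Fin (2 ^ m)) := {i | i.val < s ∧ m - r ≤ bitWeight i}
  let word (i : heavy) := evalBits m (cellPoly m i.val)
  have hli : LinearIndependent (ZMod 2) word :=
    (linearIndependent_evalBits_cellPoly m).comp _ Subtype.val_injective
  have hcode : Submodule.span (ZMod 2) (Set.range word) ≤ RMcode r m := by
    refine Submodule.span_le.2 (Set.range_subset_iff.2 fun i ↦ mem_RMcode.2 ⟨_, ?_, rfl⟩)
    have hdeg := totalDegree_cellPoly_le i.val.2
    have hweight := (Finset.mem_filter_univ _).1 i.2
    omega
  have hsupp : Submodule.span (ZMod 2) (Set.range word) ≤ supportedOn (ZMod 2) {k | k.val < s} := by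
    refine Submodule.span_le.2 (Set.range_subset_iff.2 fun i k hk ↦ ?_)
    exact evalBits_cellPoly_eq_zero (((Finset.mem_filter_univ _).1 i.2).1.trans_le (not_lt.1 hk))
  have hncard : (chi (Submodule.span (ZMod 2) (Set.range word))).ncard ≤ s := by
    refine (Set.ncard_le_ncard (chi_subset_of_le_supportedOn hsupp)).trans ?_
    rw [Set.ncard_eq_toFinset_card', Set.toFinset_ofPred, Fin.card_filter_val_lt]
    exact min_le_right _ _
  rw [← card_filter_heavy hs, ← Fintype.card_coe, ← finrank_span_eq_card hli]
  exact le_Ucap hcode hncard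

theorem bitPoint_succ_bit (m i : ℕ) (b : Bool) :
    bitPoint (m + 1) (Nat.bit b i) = Fin.cons (if b then 1 else 0) (bitPoint m i) := by
  ext j
  cases j using Fin.cases with
  | zero => simp [bitPoint]
  | succ j => simp [bitPoint, Nat.testBit_bit_succ]

theorem eval_bitPoint_bit (m i : ℕ) (b : Bool) (f : MvPolynomial (Fin (m + 1)) (ZMod 2)) :
    eval (bitPoint (m + 1) (Nat.bit b i)) f =
      eval (bitPoint m i) ((finSuccEquiv (ZMod 2) m f).eval (C (if b then 1 else 0))) := by
  rw [bitPoint_succ_bit, eval_eq_eval_mv_eval', ← Polynomial.eval_map_apply, eval_C]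

theorem totalDegree_coeff_finSuccEquiv_mul_C_le {R : Type*} [CommSemiring R] {m : ℕ}
    (f : MvPolynomial (Fin (m + 1)) R) (i : ℕ) (a : R) :
    ((finSuccEquiv R m f).coeff i * C a).totalDegree ≤ f.totalDegree - i := by
  by_cases hcoeff : (finSuccEquiv R m f).coeff i = 0
  · simp [hcoeff]
  · have hdeg := totalDegree_coeff_finSuccEquiv_add_le f i hcoeff
    have hmul := totalDegree_mul ((finSuccEquiv R m f).coeff i) (C a)
    rw [totalDegree_C] at hmul
    omega

theorem totalDegree_eval_finSuccEquiv_le {R : Type*} [CommSemiring R] {m : ℕ}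
    (f : MvPolynomial (Fin (m + 1)) R) (a : R) :
    ((finSuccEquiv R m f).eval (C a)).totalDegree ≤ f.totalDegree := by
  rw [Polynomial.eval_eq_sum_range]
  refine totalDegree_finsetSum_le fun i _ ↦ ?_
  rw [← C_pow]
  exact (totalDegree_coeff_finSuccEquiv_mul_C_le f i _).trans (Nat.sub_le _ _)

theorem totalDegree_eval_finSuccEquiv_sub_le {R : Type*} [CommRing R] {m : ℕ}
    (f : MvPolynomial (Fin (m + 1)) R) (a b : R) :
    ((finSuccEquiv R m f).eval (C a) - (finSuccEquiv R m f).eval (C b)).totalDegree ≤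
      f.totalDegree - 1 := by
  rw [Polynomial.eval_eq_sum_range, Polynomial.eval_eq_sum_range, ← Finset.sum_sub_distrib]
  refine totalDegree_finsetSum_le fun i _ ↦ ?_
  rw [← mul_sub, ← C_pow, ← C_pow, ← C_sub]
  cases i with
  | zero => simp
  | succ i => exact (totalDegree_coeff_finSuccEquiv_mul_C_le f _ _).trans (by omega)

/-- The index whose least significant binary digit is `b` and whose other digits are those of
`i`. -/
def appendBit {m : ℕ} (b : Bool) (i : Fin (2 ^ m)) : Fin (2 ^ (m + 1)) :=
  ⟨Nat.bit b i, Nat.bit_lt_two_pow_succ_iff.2 i.2⟩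

theorem appendBit_injective {m : ℕ} (b : Bool) : (appendBit (m := m) b).Injective := by
  intro i j hij
  have hdiv := congrArg (· / 2) (Fin.val_eq_of_eq hij)
  simpa [appendBit, Fin.ext_iff] using hdiv

theorem disjoint_range_appendBit {m : ℕ} (b : Bool) :
    Disjoint (Set.range (appendBit (m := m) b)) (Set.range (appendBit (!b))) := by
  rw [Set.disjoint_range_iff]
  intro i j hij
  have hbit := congrArg (fun k : Fin _ ↦ k.val.testBit 0) hij
  simp [appendBit] at hbit

theorem exists_appendBit_eq {m : ℕ} (b : Bool) (k : Fin (2 ^ (m + 1))) :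
    (∃ i, appendBit b i = k) ∨ ∃ i, appendBit (!b) i = k := by
  have hk : ∃ c i, appendBit c i = k :=
    ⟨k.val.testBit 0, ⟨k.val >>> 1, by rw [Nat.shiftRight_one]; omega⟩,
      Fin.ext (Nat.bit_testBit_zero_shiftRight_one _)⟩
  obtain ⟨c, i, hi⟩ := hk
  obtain rfl | rfl := Bool.eq_or_eq_not c b
  · exact .inl ⟨i, hi⟩
  · exact .inr ⟨i, hi⟩

/-- The restriction of a word of length `2 ^ (m + 1)` to the indices with least significant
digit `b`. -/
def slice {m : ℕ} (b : Bool) :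
    (Fin (2 ^ (m + 1)) → ZMod 2) →ₗ[ZMod 2] Fin (2 ^ m) → ZMod 2 :=
  LinearMap.funLeft (ZMod 2) (ZMod 2) (appendBit b)

theorem chi_map_slice {m : ℕ} (D : Submodule (ZMod 2) (Fin (2 ^ (m + 1)) → ZMod 2)) (b : Bool) :
    chi (D.map (slice b)) = appendBit b ⁻¹' chi D :=
  chi_map_funLeft D _

theorem disjoint_ker_slice {m : ℕ} (b : Bool) :
    Disjoint (slice (m := m) b).ker (slice (!b)).ker := by
  rw [Submodule.disjoint_def]
  intro w hw hw'
  ext k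
  obtain ⟨i, rfl⟩ | ⟨i, rfl⟩ := exists_appendBit_eq b k
  · exact congrFun hw i
  · exact congrFun hw' i

theorem slice_evalBits {m : ℕ} (b : Bool) (f : MvPolynomial (Fin (m + 1)) (ZMod 2)) :
    slice b (evalBits (m + 1) f) =
      evalBits m ((finSuccEquiv (ZMod 2) m f).eval (C (if b then 1 else 0))) := by
  ext i
  rw [evalBits_apply, ← eval_bitPoint_bit]
  exact evalBits_apply f _

theorem slice_mem_RMcode {r m : ℕ} {w : Fin (2 ^ (m + 1)) → ZMod 2} (hw : w ∈ RMcode r (m + 1))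
    (b : Bool) : slice b w ∈ RMcode r m := by
  obtain ⟨f, hf, rfl⟩ := mem_RMcode.1 hw
  exact mem_RMcode.2 ⟨_, (totalDegree_eval_finSuccEquiv_le f _).trans hf, (slice_evalBits b f).symm⟩

theorem slice_sub_slice_mem_RMcode {r m : ℕ} {w : Fin (2 ^ (m + 1)) → ZMod 2}
    (hw : w ∈ RMcode (r + 1) (m + 1)) (b c : Bool) : slice b w - slice c w ∈ RMcode r m := by
  obtain ⟨f, hf, rfl⟩ := mem_RMcode.1 hw
  rw [slice_evalBits, slice_evalBits, ← map_sub]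
  exact mem_RMcode.2
    ⟨_, (totalDegree_eval_finSuccEquiv_sub_le f _ _).trans (Nat.sub_le_of_le_add hf), rfl⟩

theorem slice_eq_slice {m : ℕ} {w : Fin (2 ^ (m + 1)) → ZMod 2} (hw : w ∈ RMcode 0 (m + 1))
    (b c : Bool) : slice b w = slice c w := by
  obtain ⟨f, hf, rfl⟩ := mem_RMcode.1 hw
  rw [totalDegree_eq_zero_iff_eq_C.1 (Nat.le_zero.1 hf)]
  simp only [slice_evalBits, finSuccEquiv_apply, eval₂Hom_C, RingHom.comp_apply, Polynomial.eval_C]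

theorem map_slice_le_RMcode {r m : ℕ} {D : Submodule (ZMod 2) (Fin (2 ^ (m + 1)) → ZMod 2)}
    (hD : D ≤ RMcode r (m + 1)) (b : Bool) : D.map (slice b) ≤ RMcode r m :=
  Submodule.map_le_iff_le_comap.2 fun _ hw ↦ slice_mem_RMcode (hD hw) b

theorem map_slice_inf_ker_slice_le_RMcode {r m : ℕ}
    {D : Submodule (ZMod 2) (Fin (2 ^ (m + 1)) → ZMod 2)} (hD : D ≤ RMcode (r + 1) (m + 1))
    (b c : Bool) : (D ⊓ (slice b).ker).map (slice c) ≤ RMcode r m := by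
  rintro _ ⟨w, ⟨hwD, hwb⟩, rfl⟩
  simpa [LinearMap.mem_ker.1 hwb] using slice_sub_slice_mem_RMcode (hD hwD) c b

theorem map_slice_inf_ker_slice_eq_bot {m : ℕ}
    {D : Submodule (ZMod 2) (Fin (2 ^ (m + 1)) → ZMod 2)} (hD : D ≤ RMcode 0 (m + 1))
    (b c : Bool) : (D ⊓ (slice b).ker).map (slice c) = ⊥ := by
  refine (Submodule.eq_bot_iff _).2 ?_
  rintro _ ⟨w, ⟨hwD, hwb⟩, rfl⟩
  exact (slice_eq_slice (hD hwD) c b).trans hwb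

theorem finrank_le_heavyCount {r m : ℕ} {D : Submodule (ZMod 2) (Fin (2 ^ m) → ZMod 2)}
    (hD : D ≤ RMcode r m) : finrank (ZMod 2) D ≤ heavyCount (m - r) (chi D).ncard := by
  induction m generalizing r with
  | zero => simpa [heavyCount_zero_left] using finrank_le_ncard_chi D
  | succ m ih =>
    obtain ⟨b, hb⟩ : ∃ b : Bool,
        (appendBit b ⁻¹' chi D).ncard ≤ (appendBit (!b) ⁻¹' chi D).ncard := by
      rcases le_total (appendBit false ⁻¹' chi D).ncard (appendBit true ⁻¹' chi D).ncard with h | h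
      exacts [⟨false, h⟩, ⟨true, h⟩]
    have hslice : finrank (ZMod 2) (D.map (slice b)) ≤
        heavyCount (m + 1 - r - 1) (appendBit b ⁻¹' chi D).ncard := by
      rw [← chi_map_slice, Nat.sub_right_comm, Nat.add_sub_cancel]
      exact ih (map_slice_le_RMcode hD b)
    have hker : finrank (ZMod 2) ((D ⊓ (slice b).ker).map (slice (!b))) ≤
        heavyCount (m + 1 - r) (appendBit (!b) ⁻¹' chi D).ncard := by
      cases r with
      | zero =>
        rw [map_slice_inf_ker_slice_eq_bot hD, finrank_bot]
        exact Nat.zero_le _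
      | succ r =>
        rw [← chi_map_slice, Nat.add_sub_add_right]
        exact (ih (map_slice_inf_ker_slice_le_RMcode hD b _)).trans (heavyCount_mono _
          (Set.ncard_le_ncard (chi_mono (Submodule.map_mono inf_le_left))))
    calc finrank (ZMod 2) D
        = finrank (ZMod 2) (D.map (slice b)) +
            finrank (ZMod 2) ((D ⊓ (slice b).ker).map (slice (!b))) :=
          finrank_eq_finrank_map_add_finrank_map_inf_ker (disjoint_ker_slice b) D
      _ ≤ heavyCount (m + 1 - r - 1) (appendBit b ⁻¹' chi D).ncard +
            heavyCount (m + 1 - r) (appendBit (!b) ⁻¹' chi D).ncard :=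
          add_le_add hslice hker
      _ ≤ heavyCount (m + 1 - r)
            ((appendBit b ⁻¹' chi D).ncard + (appendBit (!b) ⁻¹' chi D).ncard) :=
          heavyCount_pred_add_le _ hb
      _ ≤ heavyCount (m + 1 - r) (chi D).ncard :=
          heavyCount_mono _ (ncard_preimage_add_ncard_preimage_le (appendBit_injective b)
            (appendBit_injective _) (disjoint_range_appendBit b) _)

theorem Ucap_RMcode (r : ℕ) {m s : ℕ} (hs : s ≤ 2 ^ m) :
    Ucap (RMcode r m) s = heavyCount (m - r) s :=
  le_antisymm
    (Ucap_le fun _ hD hDs ↦ (finrank_le_heavyCount hD).trans (heavyCount_mono _ hDs))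
    (heavyCount_le_Ucap_RMcode r hs)

end ReedMuller

theorem stmt12_general (r m : ℕ) :
    (2 * r ≤ m + 1 → Ucap (RMcode r m) (alph m) =
      ∑ i ∈ Finset.range r, kRM (r - 1 - i) (m - 1 - 2 * i)) ∧
    (2 * r ≤ m + 2 → Ucap (RMcode r m) (bet m) =
      ∑ i ∈ Finset.Icc 1 (r - 1), kRM (r - 1 - i) (m - 2 * i)) := by
  rw [Ucap_RMcode r (alph_le_two_pow m), Ucap_RMcode r (bet_le_two_pow m)]
  exact heavyCount_alph_and_bet m r

/-- for `m ≥ 2` and `m ≥ 2r`,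
`U_α(RM(r,m)) = ∑_{i=0}^{r−1} k(r−1−i, m−1−2i)` and
`U_β(RM(r,m)) = ∑_{i=1}^{r−1} k(r−1−i, m−2i)`. -/
theorem stmt12 (r m : ℕ) (hm : 2 ≤ m) (h : 2 * r ≤ m) :
    Ucap (RMcode r m) (alph m) = ∑ i ∈ Finset.range r, kRM (r - 1 - i) (m - 1 - 2 * i) ∧
    Ucap (RMcode r m) (bet m) = ∑ i ∈ Finset.Icc 1 (r - 1), kRM (r - 1 - i) (m - 2 * i) :=
  ⟨(stmt12_general r m).1 (by omega), (stmt12_general r m).2 (by omega)⟩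
end

section
/- For integers 0 ≤ r ≤ m and 1 ≤ s ≤ 2^m, U_s(RM(r,m)) equals the number of integers j with 0 ≤ j ≤ s−1 whose binary representation contains at least m − r ones (i.e., wt(j) ≥ m − r). -/
open Module

/-- `wt x`: the number of ones in the binary representation of `x`. -/
def wtN (x : ℕ) : ℕ := (Nat.digits 2 x).count 1

/-! Order `{0,1}^m` by the integers `0, …, 2^m - 1`.

Lower bound: for each `j`, the indicator of the submasks of `j` is the evaluation vector of
`∏ (1 - X_k)` over the zero bits `k` of `j`, of degree `m - wt j`. Submasks of `j` are at most `j`,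
so these vectors form a triangular family, and those with `j < s` and `wt j ≥ m - r` span a subcode
supported on `{0, …, s - 1}`.

Upper bound: split the cube into two faces `x₀ = 0` and `x₀ = 1`, meeting the support of a subcode
in `a ≤ b` points. A polynomial function of degree at most `r` that vanishes on one face has degree
at most `r - 1` on the other. Hence restricting to the smaller face and then, on the kernel, to the
larger one bounds the dimension by induction on `m`; the induction closes because
`N k s = #{j < s | wt j ≥ k}` satisfies `N (k - 1) a + N k b ≤ N k (a + b)` for `a ≤ b`, an
inequality that follows by halving `a` and `b`. -/

open Finset

section WeightCount

theorem wtN_two_mul (j : ℕ) : wtN (2 * j) = wtN j := by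
  rcases j.eq_zero_or_pos with rfl | hj
  · rfl
  · rw [wtN, Nat.digits_def' one_lt_two (by lia)]
    simp [wtN]

theorem wtN_two_mul_add_one (j : ℕ) : wtN (2 * j + 1) = wtN j + 1 := by
  rw [wtN, Nat.digits_def' one_lt_two (2 * j).succ_pos]
  simp [wtN, Nat.add_mod, show (2 * j + 1) / 2 = j by lia]

theorem wtN_eq_card_testBit {m j : ℕ} (hj : j < 2 ^ m) :
    wtN j = #{k : Fin m | j.testBit k} := by
  induction m generalizing j with
  | zero =>
    obtain rfl : j = 0 := by simpa using hj
    rfl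
  | succ m ih =>
    rw [pow_succ] at hj
    simp only [Fin.card_filter_univ_succ, Fin.val_zero, Fin.val_succ, Nat.testBit_succ]
    rw [← ih (by lia)]
    obtain ⟨i, rfl | rfl⟩ := j.even_or_odd'
    · simp [wtN_two_mul]
    · simp [wtN_two_mul_add_one, show (2 * i + 1) / 2 = i by lia]

/-- The number of integers `j < s` with at least `k` binary ones. -/
def weightCount (k s : ℕ) : ℕ :=
  Nat.count (k ≤ wtN ·) s

theorem weightCount_zero_left (s : ℕ) : weightCount 0 s = s := by
  simp [weightCount]

theorem weightCount_succ (k s : ℕ) :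
    weightCount k (s + 1) = weightCount k s + if k ≤ wtN s then 1 else 0 :=
  Nat.count_succ _ _

-- For `k = 0` the truncated `k - 1 = 0` is the right value: every `j` counts.
theorem weightCount_two_mul (k s : ℕ) :
    weightCount k (2 * s) = weightCount k s + weightCount (k - 1) s := by
  induction s with
  | zero => rfl
  | succ n ih =>
    rw [Nat.mul_succ, weightCount_succ, weightCount_succ, ih, wtN_two_mul, wtN_two_mul_add_one,
      weightCount_succ, weightCount_succ]
    simp only [← Nat.sub_le_iff_le_add]
    lia

theorem weightCount_two_mul_add_one (k s : ℕ) :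
    weightCount k (2 * s + 1) = weightCount k (s + 1) + weightCount (k - 1) s := by
  rw [weightCount_succ, weightCount_two_mul, wtN_two_mul, weightCount_succ]
  lia

theorem weightCount_succ_add_le (k s : ℕ) :
    weightCount k (s + 1) + weightCount (k - 1) s ≤
      weightCount k s + weightCount (k - 1) (s + 1) := by
  simp only [weightCount_succ]
  split_ifs <;> lia

theorem weightCount_add_le {a b : ℕ} (k : ℕ) (hab : a ≤ b) :
    weightCount (k - 1) a + weightCount k b ≤ weightCount k (a + b) := by
  induction b using Nat.strong_induction_on generalizing a k with
  | _ b ih =>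
  rcases a.eq_zero_or_pos with rfl | ha
  · simp [weightCount]
  rcases hab.eq_or_lt with rfl | hlt
  · rw [← two_mul, weightCount_two_mul, add_comm]
  obtain ⟨a, rfl | rfl⟩ := a.even_or_odd' <;> obtain ⟨b, rfl | rfl⟩ := b.even_or_odd'
  · have h₁ := ih b (by lia) k (a := a) (by lia)
    have h₂ := ih b (by lia) (k - 1) (a := a) (by lia)
    rw [← mul_add]
    simp only [weightCount_two_mul]
    lia
  · have h₁ := ih (b + 1) (by lia) k (a := a) (by lia)
    have h₂ := ih b (by lia) (k - 1) (a := a) (by lia)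
    rw [← add_assoc, ← mul_add]
    simp only [weightCount_two_mul, weightCount_two_mul_add_one]
    rw [← add_assoc] at h₁
    lia
  · have h₁ := ih b (by lia) k (a := a + 1) (by lia)
    have h₂ := ih b (by lia) (k - 1) (a := a) (by lia)
    rw [add_right_comm, ← mul_add]
    simp only [weightCount_two_mul, weightCount_two_mul_add_one]
    rw [add_right_comm] at h₁
    lia
  · -- Larger halves are paired with smaller ones, so that both sums are `a + b + 1`.
    have h₁ := ih b (by lia) k (a := a + 1) (by lia)
    have h₂ := ih (b + 1) (by lia) (k - 1) (a := a) (by lia)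
    have h₃ := weightCount_succ_add_le k b
    rw [show 2 * a + 1 + (2 * b + 1) = 2 * (a + b + 1) by ring]
    simp only [weightCount_two_mul, weightCount_two_mul_add_one]
    rw [add_right_comm] at h₁
    rw [← add_assoc] at h₂
    lia

end WeightCount

section LinearAlgebra

variable {K V W W' : Type*} [DivisionRing K] [AddCommGroup V] [Module K V]
  [AddCommGroup W] [Module K W] [AddCommGroup W'] [Module K W']

theorem finrank_map_add_finrank_inf_ker (D : Submodule K V) [FiniteDimensional K D]
    (f : V →ₗ[K] W) :
    finrank K (D.map f) + finrank K ↥(D ⊓ LinearMap.ker f) = finrank K D := by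
  rw [← LinearMap.range_domRestrict, ← (f.domRestrict D).finrank_range_add_finrank_ker,
    LinearMap.ker_domRestrict, ← Submodule.map_comap_subtype,
    (Submodule.equivSubtypeMap D _).finrank_eq]

theorem finrank_map_add_finrank_map_inf_ker (D : Submodule K V) [FiniteDimensional K D]
    (f : V →ₗ[K] W) (g : V →ₗ[K] W') (hfg : Disjoint (LinearMap.ker f) (LinearMap.ker g)) :
    finrank K (D.map f) + finrank K ((D ⊓ LinearMap.ker f).map g) = finrank K D := by
  have : FiniteDimensional K ↥(D ⊓ LinearMap.ker f) :=
    Submodule.finiteDimensional_of_le inf_le_left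
  have hg := finrank_map_add_finrank_inf_ker (D ⊓ LinearMap.ker f) g
  rw [inf_assoc, hfg.eq_bot, inf_bot_eq, finrank_bot, add_zero] at hg
  rw [hg, finrank_map_add_finrank_inf_ker]

theorem finrank_le_ncard_of_support_subset {ι : Type*} [Finite ι] {D : Submodule K (ι → K)}
    {S : Set ι} (hS : ∀ c ∈ D, Function.support c ⊆ S) : finrank K D ≤ S.ncard := by
  have := Fintype.ofFinite S
  have hinj : Function.Injective ((LinearMap.funLeft K K ((↑) : S → ι)).domRestrict D) := by
    rw [LinearMap.injective_domRestrict_iff, Submodule.disjoint_def]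
    intro c hc hcS
    funext i
    by_contra hi
    exact hi (congrFun hcS ⟨i, hS c hc hi⟩)
  rw [← Nat.card_coe_set_eq, Nat.card_eq_fintype_card, ← finrank_fintype_fun_eq_card K]
  exact LinearMap.finrank_le_finrank_of_injective hinj

theorem linearIndependent_row_of_isLowerTriangular {R n : Type*} [CommRing R] [Finite n]
    [LinearOrder n] {M : Matrix n n R} (hM : M.IsLowerTriangular) (hdiag : ∀ i, IsUnit (M i i)) :
    LinearIndependent R M.row := by
  have := Fintype.ofFinite n
  refine Matrix.linearIndependent_rows_of_isUnit ((Matrix.isUnit_iff_isUnit_det M).2 ?_)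
  rw [Matrix.det_of_isLowerTriangular M hM, IsUnit.prod_univ_iff]
  exact hdiag

end LinearAlgebra

section Cube

variable (R : Type*) [CommRing R] {m : ℕ}

/-- The function on the cube `{0,1}^m`, with points encoded as Boolean vectors, defined by the
monomial with exponent vector `α`. -/
def cubeMonomial (α : Fin m → ℕ) (x : Fin m → Bool) : R :=
  ∏ i, (if x i then 1 else 0) ^ α i

/-- The functions on `{0,1}^m` defined by polynomials of degree less than `t`. The strict bound
makes `t = 0` the zero space, where differences of face restrictions of constants lie. -/
def cubePolynomials (t m : ℕ) : Submodule R ((Fin m → Bool) → R) :=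
  Submodule.span R (cubeMonomial R '' {α | ∑ i, α i < t})

/-- Identification of `{0,1}^m` with the face `x₀ = a` of `{0,1}^(m+1)`. -/
def face (a : Bool) : (Fin m → Bool) ↪ (Fin (m + 1) → Bool) where
  toFun x := Fin.cons a x
  inj' := Fin.cons_right_injective (α := fun _ => Bool) a

/-- Restriction of functions on `{0,1}^(m+1)` to the face `x₀ = a`. -/
def faceRestrict (a : Bool) : ((Fin (m + 1) → Bool) → R) →ₗ[R] ((Fin m → Bool) → R) :=
  LinearMap.funLeft R R (face a)

variable {R}

theorem cubeMonomial_mem_cubePolynomials {t : ℕ} {α : Fin m → ℕ} (hα : ∑ i, α i < t) :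
    cubeMonomial R α ∈ cubePolynomials R t m :=
  Submodule.subset_span ⟨α, hα, rfl⟩

theorem cubePolynomials_zero : cubePolynomials R 0 m = ⊥ := by
  simp [cubePolynomials]

theorem faceRestrict_cubeMonomial (a : Bool) (α : Fin (m + 1) → ℕ) :
    faceRestrict R a (cubeMonomial R α) =
      (if a then (1 : R) else 0) ^ α 0 • cubeMonomial R (Fin.tail α) := by
  funext x
  simp [faceRestrict, face, cubeMonomial, LinearMap.funLeft_apply, Fin.prod_univ_succ, Fin.tail]

theorem map_faceRestrict_cubePolynomials_le (t : ℕ) (a : Bool) :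
    (cubePolynomials R t (m + 1)).map (faceRestrict R a) ≤ cubePolynomials R t m := by
  rw [cubePolynomials, Submodule.map_span_le]
  rintro _ ⟨α, hα : ∑ i, α i < t, rfl⟩
  rw [Fin.sum_univ_succ] at hα
  rw [faceRestrict_cubeMonomial]
  refine Submodule.smul_mem _ _ (cubeMonomial_mem_cubePolynomials ?_)
  simp only [Fin.tail]
  lia

theorem map_faceRestrict_sub_cubePolynomials_le (t : ℕ) (a b : Bool) :
    (cubePolynomials R t (m + 1)).map (faceRestrict R a - faceRestrict R b) ≤
      cubePolynomials R (t - 1) m := by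
  rw [cubePolynomials, Submodule.map_span_le]
  rintro _ ⟨α, hα : ∑ i, α i < t, rfl⟩
  rw [Fin.sum_univ_succ] at hα
  rw [LinearMap.sub_apply, faceRestrict_cubeMonomial, faceRestrict_cubeMonomial, ← sub_smul]
  rcases (α 0).eq_zero_or_pos with h₀ | h₀
  · simp [h₀]
  · refine Submodule.smul_mem _ _ (cubeMonomial_mem_cubePolynomials ?_)
    simp only [Fin.tail]
    lia

theorem map_faceRestrict_cubePolynomials_inf_ker_le (t : ℕ) (a b : Bool) :
    (cubePolynomials R t (m + 1) ⊓ LinearMap.ker (faceRestrict R a)).map (faceRestrict R b) ≤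
      cubePolynomials R (t - 1) m := by
  rintro _ ⟨c, ⟨hc, hca : faceRestrict R a c = 0⟩, rfl⟩
  have hdiff := map_faceRestrict_sub_cubePolynomials_le t b a ⟨c, hc, rfl⟩
  rwa [LinearMap.sub_apply, hca, sub_zero] at hdiff

theorem compl_range_face (a : Bool) : (Set.range (face (m := m) a))ᶜ = Set.range (face !a) := by
  have mem_range_face (b : Bool) (x : Fin (m + 1) → Bool) : x ∈ Set.range (face b) ↔ x 0 = b := by
    constructor
    · rintro ⟨y, rfl⟩
      rfl
    · rintro rfl
      exact ⟨Fin.tail x, Fin.cons_self_tail x⟩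
  ext x
  rw [Set.mem_compl_iff, mem_range_face, mem_range_face, Bool.eq_not]

theorem disjoint_ker_faceRestrict (a : Bool) :
    Disjoint (LinearMap.ker (faceRestrict R (m := m) a)) (LinearMap.ker (faceRestrict R !a)) := by
  rw [Submodule.disjoint_def]
  intro c hc hc'
  funext x
  by_cases hx : x ∈ Set.range (face a)
  · obtain ⟨y, rfl⟩ := hx
    exact congrFun hc y
  · rw [← Set.mem_compl_iff, compl_range_face] at hx
    obtain ⟨y, rfl⟩ := hx
    exact congrFun hc' y

theorem ncard_preimage_face_add_ncard_preimage_face_not (S : Set (Fin (m + 1) → Bool))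
    (a : Bool) : (face a ⁻¹' S).ncard + (face (!a) ⁻¹' S).ncard = S.ncard := by
  rw [← Set.ncard_inter_add_ncard_sdiff_eq_ncard S (Set.range (face a)), Set.sdiff_eq,
    compl_range_face, ← Set.image_preimage_eq_inter_range, ← Set.image_preimage_eq_inter_range,
    Set.ncard_image_of_injective _ (face a).injective,
    Set.ncard_image_of_injective _ (face !a).injective]

theorem finrank_le_weightCount_of_le_cubePolynomials {F : Type*} [Field F] {t : ℕ}
    {D : Submodule F ((Fin m → Bool) → F)} {S : Set (Fin m → Bool)}
    (hD : D ≤ cubePolynomials F t m) (hS : ∀ c ∈ D, Function.support c ⊆ S) :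
    finrank F D ≤ weightCount (m + 1 - t) S.ncard := by
  induction m generalizing t with
  | zero =>
    rcases t.eq_zero_or_pos with rfl | ht
    · obtain rfl : D = ⊥ := by rwa [cubePolynomials_zero, le_bot_iff] at hD
      simp
    · rw [Nat.sub_eq_zero_of_le (by lia), weightCount_zero_left]
      exact finrank_le_ncard_of_support_subset hS
  | succ m ih =>
    rcases t.eq_zero_or_pos with rfl | ht
    · obtain rfl : D = ⊥ := by rwa [cubePolynomials_zero, le_bot_iff] at hD
      simp
    let T (a : Bool) : Set (Fin m → Bool) := face a ⁻¹' S
    obtain ⟨a, ha⟩ : ∃ a, (T a).ncard ≤ (T !a).ncard :=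
      (le_total (T false).ncard (T true).ncard).elim (⟨false, ·⟩) (⟨true, ·⟩)
    have hface : finrank F (D.map (faceRestrict F a)) ≤ weightCount (m + 1 - t) (T a).ncard := by
      refine ih ((Submodule.map_mono hD).trans (map_faceRestrict_cubePolynomials_le t a)) ?_
      rintro _ ⟨c, hc, rfl⟩ x hx
      exact hS c hc hx
    have hopposite : finrank F ((D ⊓ LinearMap.ker (faceRestrict F a)).map (faceRestrict F !a)) ≤
        weightCount (m + 1 - (t - 1)) (T !a).ncard := by
      refine ih ((Submodule.map_mono (inf_le_inf_right _ hD)).trans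
        (map_faceRestrict_cubePolynomials_inf_ker_le t a !a)) ?_
      rintro _ ⟨c, hc, rfl⟩ x hx
      exact hS c hc.1 hx
    calc finrank F D
        = finrank F (D.map (faceRestrict F a)) +
            finrank F ((D ⊓ LinearMap.ker (faceRestrict F a)).map (faceRestrict F !a)) :=
          (finrank_map_add_finrank_map_inf_ker D _ _ (disjoint_ker_faceRestrict a)).symm
      _ ≤ weightCount (m + 1 + 1 - t - 1) (T a).ncard +
            weightCount (m + 1 + 1 - t) (T !a).ncard := by
          rw [show m + 1 + 1 - t - 1 = m + 1 - t by lia,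
            show m + 1 + 1 - t = m + 1 - (t - 1) by lia]
          exact add_le_add hface hopposite
      _ ≤ weightCount (m + 1 + 1 - t) ((T a).ncard + (T !a).ncard) := weightCount_add_le _ ha
      _ = weightCount (m + 1 + 1 - t) S.ncard := by
          rw [ncard_preimage_face_add_ncard_preimage_face_not]

end Cube

section Bits

variable {m : ℕ}

/-- The binary expansion of `i < 2^m`, least significant bit first, as a point of `{0,1}^m`. -/
def bits (m : ℕ) (i : Fin (2 ^ m)) : Fin m → Bool :=
  fun k => i.val.testBit k

theorem le_of_bits_le {i j : Fin (2 ^ m)} (h : bits m i ≤ bits m j) : i ≤ j := by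
  refine Nat.le_of_testBit fun k hk => ?_
  have hkm : k < m :=
    (Nat.pow_lt_pow_iff_right one_lt_two).1 ((Nat.ge_two_pow_of_testBit hk).trans_lt i.isLt)
  exact h ⟨k, hkm⟩ hk

theorem bits_bijective (m : ℕ) : Function.Bijective (bits m) :=
  (Fintype.bijective_iff_injective_and_card _).2
    ⟨fun _ _ h => le_antisymm (le_of_bits_le h.le) (le_of_bits_le h.ge), by simp⟩

/-- The bijection `bits m` between `{0, …, 2^m - 1}` and `{0,1}^m`. -/
noncomputable def bitsEquiv (m : ℕ) : Fin (2 ^ m) ≃ (Fin m → Bool) :=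
  Equiv.ofBijective (bits m) (bits_bijective m)

theorem card_filter_bits_eq_false (j : Fin (2 ^ m)) :
    #{k | bits m j k = false} = m - wtN j := by
  have hsplit := card_filter_add_card_filter_not (s := univ) (fun k => bits m j k = true)
  simp only [Bool.not_eq_true, card_univ, Fintype.card_fin] at hsplit
  rw [wtN_eq_card_testBit j.isLt]
  exact (Nat.sub_eq_of_eq_add' hsplit.symm).symm

end Bits

section CubeCode

variable (R : Type*) [CommRing R]

/-- The analogue of `RMcode r m` over an arbitrary coefficient ring: evaluation vectors, at the
points of `{0,1}^m ⊆ R^m` only, of polynomials of total degree at most `r`. It unfolds to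
`RMcode r m` for `R = ZMod 2`. -/
def cubeCode (r m : ℕ) : Submodule R (Fin (2 ^ m) → R) :=
  Submodule.span R
    {w | ∃ f : MvPolynomial (Fin m) R, f.totalDegree ≤ r ∧
      w = fun i => MvPolynomial.eval (fun k => if bits m i k then 1 else 0) f}

/-- The matrix whose row `j` is the indicator of the integers `i` whose binary ones are among those
of `j`. -/
noncomputable def submaskMatrix (m : ℕ) : Matrix (Fin (2 ^ m)) (Fin (2 ^ m)) R :=
  Matrix.of fun j => Set.indicator {i | bits m i ≤ bits m j} 1

variable {R} {r m : ℕ}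

theorem map_cubeCode_le_cubePolynomials :
    (cubeCode R r m).map (LinearMap.funLeft R R (bitsEquiv m).symm) ≤
      cubePolynomials R (r + 1) m := by
  rw [cubeCode, Submodule.map_span_le]
  rintro _ ⟨f, hf, rfl⟩
  have hexpand : LinearMap.funLeft R R (bitsEquiv m).symm
      (fun i => MvPolynomial.eval (fun k => if bits m i k then 1 else 0) f) =
        ∑ d ∈ f.support, f.coeff d • cubeMonomial R d := by
    funext x
    have hx : bits m ((bitsEquiv m).symm x) = x := (bitsEquiv m).apply_symm_apply x
    simp [LinearMap.funLeft_apply, hx, MvPolynomial.eval_eq', cubeMonomial]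
  rw [hexpand]
  refine Submodule.sum_mem _ fun d hd => Submodule.smul_mem _ _ ?_
  have hdeg := MvPolynomial.le_totalDegree hd
  rw [Finsupp.sum_fintype _ _ fun _ => rfl] at hdeg
  exact cubeMonomial_mem_cubePolynomials (Nat.lt_succ_of_le (hdeg.trans hf))

theorem totalDegree_prod_one_sub_X_le {σ : Type*} (A : Finset σ) :
    (∏ k ∈ A, (1 - MvPolynomial.X k : MvPolynomial σ R)).totalDegree ≤ #A := by
  rw [card_eq_sum_ones]
  refine (MvPolynomial.totalDegree_finsetProd _ _).trans (sum_le_sum fun k _ => ?_)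
  refine (MvPolynomial.totalDegree_sub _ _).trans (max_le (by simp) ?_)
  exact (MvPolynomial.totalDegree_monomial_le _ _).trans (by simp)

theorem submaskMatrix_apply_eq_eval (j i : Fin (2 ^ m)) :
    submaskMatrix R m j i = MvPolynomial.eval (fun k => if bits m i k then 1 else 0)
      (∏ k with bits m j k = false, (1 - MvPolynomial.X k)) := by
  simp only [submaskMatrix, Matrix.of_apply, map_prod, map_sub, map_one, MvPolynomial.eval_X]
  by_cases hij : bits m i ≤ bits m j
  · rw [Set.indicator_of_mem (by exact hij), Pi.one_apply, prod_eq_one]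
    intro k hk
    have hik : bits m i k = false := le_bot_iff.1 ((hij k).trans_eq (mem_filter.1 hk).2)
    simp [hik]
  · rw [Set.indicator_of_notMem (by exact hij)]
    obtain ⟨k, hk⟩ := not_forall.1 hij
    obtain ⟨hjk, hik⟩ := Bool.lt_iff.1 (not_le.1 hk)
    exact (prod_eq_zero (i := k) (by simpa using hjk) (by simp [hik])).symm

theorem row_submaskMatrix_mem_cubeCode {j : Fin (2 ^ m)} (hj : m - r ≤ wtN j) :
    (submaskMatrix R m).row j ∈ cubeCode R r m := by
  refine Submodule.subset_span ⟨_, ?_, funext fun i => submaskMatrix_apply_eq_eval j i⟩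
  refine (totalDegree_prod_one_sub_X_le _).trans ?_
  rw [card_filter_bits_eq_false]
  lia

theorem submaskMatrix_isLowerTriangular : (submaskMatrix R m).IsLowerTriangular :=
  fun _ _ hij => Set.indicator_of_notMem (fun h => hij.not_ge (le_of_bits_le h)) _

theorem linearIndependent_row_submaskMatrix : LinearIndependent R (submaskMatrix R m).row :=
  linearIndependent_row_of_isLowerTriangular submaskMatrix_isLowerTriangular fun j => by
    simp [submaskMatrix]

end CubeCode

section Subcodes

variable {F : Type} [Field F] {r m : ℕ}

theorem chi_subset_iff_le_supportedOn {n : ℕ} {D : Submodule F (Fin n → F)} {J : Set (Fin n)} :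
    chi D ⊆ J ↔ D ≤ supportedOn F J := by
  refine ⟨fun h c hc i hi => ?_, ?_⟩
  · by_contra hci
    exact hi (h ⟨c, hc, hci⟩)
  · rintro h i ⟨c, hc, hci⟩
    by_contra hi
    exact hci (h hc i hi)

theorem finrank_le_weightCount_of_le_cubeCode {D : Submodule F (Fin (2 ^ m) → F)}
    (hD : D ≤ cubeCode F r m) : finrank F D ≤ weightCount (m - r) (chi D).ncard := by
  let e := LinearEquiv.funCongrLeft F F (bitsEquiv m).symm
  have hsupport : ∀ c ∈ D.map e.toLinearMap, Function.support c ⊆ bitsEquiv m '' chi D := by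
    rintro _ ⟨c, hc, rfl⟩ x hx
    exact ⟨(bitsEquiv m).symm x, ⟨c, hc, hx⟩, (bitsEquiv m).apply_symm_apply x⟩
  have hbound := finrank_le_weightCount_of_le_cubePolynomials
    (D := D.map e.toLinearMap) ((Submodule.map_mono hD).trans map_cubeCode_le_cubePolynomials)
    hsupport
  rwa [LinearEquiv.finrank_map_eq, Set.ncard_image_of_injective _ (bitsEquiv m).injective,
    Nat.add_sub_add_right] at hbound

theorem exists_le_cubeCode_finrank_eq_weightCount {s : ℕ} (hs : s ≤ 2 ^ m) :
    ∃ D ≤ cubeCode F r m, (chi D).ncard ≤ s ∧ finrank F D = weightCount (m - r) s := by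
  let _ := Nat.CountSet.fintype (m - r ≤ wtN ·) s
  let index (j : {j // j < s ∧ m - r ≤ wtN j}) : Fin (2 ^ m) := ⟨j, j.2.1.trans_le hs⟩
  let g := (submaskMatrix F m).row ∘ index
  have hindex : Function.Injective index := fun _ _ h => Subtype.ext (congrArg Fin.val h)
  have hg : LinearIndependent F g := linearIndependent_row_submaskMatrix.comp index hindex
  refine ⟨Submodule.span F (Set.range g), ?_, ?_, ?_⟩
  · rw [Submodule.span_le]
    rintro _ ⟨j, rfl⟩
    exact row_submaskMatrix_mem_cubeCode j.2.2
  · have hchi : chi (Submodule.span F (Set.range g)) ⊆ {i | i < s} := by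
      rw [chi_subset_iff_le_supportedOn, Submodule.span_le]
      rintro _ ⟨j, rfl⟩ i (hi : ¬ i.val < s)
      exact submaskMatrix_isLowerTriangular (Fin.lt_def.2 (j.2.1.trans_le (not_lt.1 hi)))
    refine (Set.ncard_le_ncard hchi).trans ?_
    rw [Set.ncard_eq_toFinset_card', Set.toFinset_ofPred, Fin.card_filter_val_lt]
    exact min_le_right _ _
  · rw [finrank_span_eq_card hg, weightCount, Nat.count_eq_card_fintype]

end Subcodes

theorem stmt19_general {F : Type} [Field F] (r m s : ℕ) (hs : s ≤ 2 ^ m) :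
    Ucap (cubeCode F r m) s = #{j ∈ range s | m - r ≤ wtN j} := by
  rw [← Nat.count_eq_card_filter_range]
  refine IsGreatest.csSup_eq ⟨exists_le_cubeCode_finrank_eq_weightCount hs, ?_⟩
  rintro _ ⟨D, hD, hDs, rfl⟩
  exact (finrank_le_weightCount_of_le_cubeCode hD).trans (Nat.count_monotone _ hDs)

/-- for `0 ≤ r ≤ m` and `1 ≤ s ≤ 2^m`, `U_s(RM(r,m))` equals the number
of integers `j ∈ [0, s−1]` whose binary representation has at least `m − r` ones. -/
theorem stmt19 (r m : ℕ) (hrm : r ≤ m) (s : ℕ) (hs1 : 1 ≤ s) (hs2 : s ≤ 2 ^ m) :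
    Ucap (RMcode r m) s = ((Finset.range s).filter fun j => m - r ≤ wtN j).card :=
  stmt19_general r m s hs2
end
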